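/- Every closed subspace of a weak (4,4)-structured space is weak (4,4)-structured: if X is a weak (4,4)-structured topological space and F is a closed subset of X, then F with the subspace topology is weak (4,4)-structured. -/

import Mathlib

open Set Function TopologicalSpace

universe u

/-- A map between topological spaces is *perfect* if it is continuous, closed, and
every fiber is compact. -/
def PerfectMap {Y : Type*} {Z : Type*} [TopologicalSpace Y] [TopologicalSpace Z]
    (f : Y → Z) : Prop :=
  Continuous f ∧ IsClosedMap f ∧ ∀ z : Z, IsCompact (f ⁻¹' {z})

/-- A topological space `X` is a *Lindelöf Σ-space* if there exist a topological space `Y`,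
a continuous surjection from `Y` onto `X`, and a perfect surjection from `Y` onto some
second-countable space. -/
def IsLindelofSigma (X : Type u) [TopologicalSpace X] : Prop :=
  ∃ (Y : Type u) (tY : TopologicalSpace Y) (Z : Type u) (tZ : TopologicalSpace Z),
    @SecondCountableTopology Z tZ ∧
    (∃ f : Y → X, @Continuous Y X tY _ f ∧ Surjective f) ∧
    (∃ g : Y → Z, @PerfectMap Y Z tY tZ g ∧ Surjective g)

/-- A topological space `X` is a *charming space* if there is a subset `Y` of `X` that is a
Lindelöf Σ-space in the subspace topology and such that for every open `U ⊇ Y`,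
the set `X \ U` is a Lindelöf Σ-space in the subspace topology. -/
def IsCharming (X : Type u) [TopologicalSpace X] : Prop :=
  ∃ Y : Set X, IsLindelofSigma Y ∧
    ∀ U : Set X, IsOpen U → Y ⊆ U → IsLindelofSigma ↥(Uᶜ)

/-- A *CL-charming* space: the shell `Y` can be chosen closed. -/
def IsCLCharming (X : Type u) [TopologicalSpace X] : Prop :=
  ∃ Y : Set X, IsClosed Y ∧ IsLindelofSigma Y ∧
    ∀ U : Set X, IsOpen U → Y ⊆ U → IsLindelofSigma ↥(Uᶜ)

/-- A *CO-charming* space: the shell `Y` can be chosen compact. -/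
def IsCOCharming (X : Type u) [TopologicalSpace X] : Prop :=
  ∃ Y : Set X, IsCompact Y ∧ IsLindelofSigma Y ∧
    ∀ U : Set X, IsOpen U → Y ⊆ U → IsLindelofSigma ↥(Uᶜ)

/-- A space has a *countable network* if there is a countable family `N` of subsets such that
every point in every open set `V` is contained in a member of `N` contained in `V`. -/
def HasCountableNetwork (X : Type u) [TopologicalSpace X] : Prop :=
  ∃ N : Set (Set X), N.Countable ∧
    ∀ x : X, ∀ V : Set X, IsOpen V → x ∈ V → ∃ n ∈ N, x ∈ n ∧ n ⊆ V

/-- A topological space `X` is *weak (4,4)-structured* if there exist a topological space `Y`,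
a continuous surjection from `Y` onto `X`, and a perfect surjection from `Y` onto some
charming space. -/
def IsWeak44Structured (X : Type u) [TopologicalSpace X] : Prop :=
  ∃ (Y : Type u) (tY : TopologicalSpace Y) (M : Type u) (tM : TopologicalSpace M),
    @IsCharming M tM ∧
    (∃ f : Y → X, @Continuous Y X tY _ f ∧ Surjective f) ∧
    (∃ g : Y → M, @PerfectMap Y M tY tM g ∧ Surjective g)

/-!
Given a continuous surjection `f : Y → X` and a perfect map `g : Y → M`, a closed `F ⊆ X` is the
image of the closed set `K = f ⁻¹' F`, and `g` restricts to a perfect map of `K` onto `g '' K`,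
which is closed in `M`. So closed-heredity passes from a class of spaces `M` to the class of the
corresponding spaces `X`; this applies to second-countable `M` and to charming `M`. For charming
`M` with shell `S` and `N ⊆ M` closed, `S ∩ N` is a shell of `N`: it is closed in `S`, and if
`V` is open in `M` with `S ∩ N ⊆ V`, then `N \ V` is the complement of the open set
`V ∪ (M \ N)`, which contains `S`.
-/

/-- The class of continuous images of perfect preimages of members of a class `P` of topological
spaces. Lindelöf Σ-spaces and weak (4,4)-structured spaces are the instances where `P` is
second countability and charmingness. The auxiliary spaces share the universe of `X`. -/
def IsImageOfPerfectPreimage (P : ∀ Z : Type u, [TopologicalSpace Z] → Prop)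
    (X : Type u) [TopologicalSpace X] : Prop :=
  ∃ (Y : Type u) (_ : TopologicalSpace Y) (Z : Type u) (_ : TopologicalSpace Z),
    P Z ∧ (∃ f : Y → X, Continuous f ∧ Surjective f) ∧ (∃ g : Y → Z, PerfectMap g ∧ Surjective g)

/-- A class `P` of topological spaces is closed-hereditary if it contains every closed subspace of
each of its members. -/
def ClosedHereditary (P : ∀ Z : Type u, [TopologicalSpace Z] → Prop) : Prop :=
  ∀ ⦃X : Type u⦄ [TopologicalSpace X], P X → ∀ ⦃F : Set X⦄, IsClosed F → P F

theorem perfectMap_iff_isProperMap {Y Z : Type*} [TopologicalSpace Y] [TopologicalSpace Z]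
    {g : Y → Z} : PerfectMap g ↔ IsProperMap g :=
  isProperMap_iff_isClosedMap_and_compact_fibers.symm

theorem PerfectMap.imageFactorization {Y Z : Type*} [TopologicalSpace Y] [TopologicalSpace Z]
    {g : Y → Z} (hg : PerfectMap g) {K : Set Y} (hK : IsClosed K) :
    PerfectMap (K.imageFactorization g) := by
  rw [perfectMap_iff_isProperMap] at hg ⊢
  have hgK : IsProperMap fun y : K => g y := hg.restrict hK
  exact isProperMap_of_comp_of_inj (hgK.continuous.subtype_mk _) continuous_subtype_val hgK
    Subtype.val_injective

theorem ClosedHereditary.isImageOfPerfectPreimage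
    {P : ∀ Z : Type u, [TopologicalSpace Z] → Prop} (hP : ClosedHereditary P) :
    ClosedHereditary (IsImageOfPerfectPreimage P) := by
  rintro X _ ⟨Y, _, Z, _, hZ, ⟨f, hf, hf_surj⟩, g, hg, -⟩ F hF
  have hK : IsClosed (f ⁻¹' F) := hF.preimage hf
  exact ⟨f ⁻¹' F, inferInstance, g '' (f ⁻¹' F), inferInstance,
    hP hZ (hg.2.1 _ hK),
    ⟨F.restrictPreimage f, hf.restrictPreimage, F.restrictPreimage_surjective hf_surj⟩,
    (f ⁻¹' F).imageFactorization g, hg.imageFactorization hK, imageFactorization_surjective⟩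

theorem IsImageOfPerfectPreimage.of_continuous_surjective
    {P : ∀ Z : Type u, [TopologicalSpace Z] → Prop} {X X' : Type u} [TopologicalSpace X]
    [TopologicalSpace X'] (hX : IsImageOfPerfectPreimage P X) {e : X → X'} (he : Continuous e)
    (he_surj : Surjective e) : IsImageOfPerfectPreimage P X' := by
  obtain ⟨Y, _, Z, _, hZ, ⟨f, hf, hf_surj⟩, hg⟩ := hX
  exact ⟨Y, _, Z, _, hZ, ⟨e ∘ f, he.comp hf, he_surj.comp hf_surj⟩, hg⟩

theorem closedHereditary_secondCountableTopology :
    ClosedHereditary.{u} SecondCountableTopology :=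
  fun _ _ _ _ _ => inferInstance

theorem closedHereditary_isLindelofSigma : ClosedHereditary IsLindelofSigma.{u} :=
  closedHereditary_secondCountableTopology.isImageOfPerfectPreimage

theorem IsLindelofSigma.preimage_val {X : Type u} [TopologicalSpace X] {S F : Set X}
    (hS : IsLindelofSigma S) (hF : IsClosed F) :
    IsLindelofSigma ((↑) ⁻¹' S : Set F) := by
  have hSF : IsLindelofSigma ((↑) ⁻¹' F : Set S) :=
    closedHereditary_isLindelofSigma hS (hF.preimage continuous_subtype_val)
  let swap : ((↑) ⁻¹' F : Set S) → ((↑) ⁻¹' S : Set F) := fun x => ⟨⟨x, x.2⟩, x.1.2⟩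
  have hswap : Continuous swap := by fun_prop
  have hswap_surj : Surjective swap := fun x => ⟨⟨⟨x, x.2⟩, x.1.2⟩, rfl⟩
  exact IsImageOfPerfectPreimage.of_continuous_surjective hSF hswap hswap_surj

theorem closedHereditary_isCharming : ClosedHereditary IsCharming.{u} := by
  rintro X _ ⟨S, hS, hS_compl⟩ F hF
  refine ⟨(↑) ⁻¹' S, hS.preimage_val hF, fun U hU hSU => ?_⟩
  obtain ⟨V, hV, rfl⟩ := isOpen_induced_iff.1 hU
  have hSV : S ⊆ V ∪ Fᶜ := fun x hxS =>
    or_iff_not_imp_right.2 fun hxF => hSU (a := ⟨x, not_not.1 hxF⟩) hxS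
  have h_compl : ((↑) ⁻¹' V : Set F)ᶜ = (↑) ⁻¹' (V ∪ Fᶜ)ᶜ := by
    rw [compl_union, compl_compl, preimage_inter, Subtype.coe_preimage_self, inter_univ,
      preimage_compl]
  rw [h_compl]
  exact (hS_compl _ (hV.union hF.isOpen_compl) hSV).preimage_val hF

theorem closed_subspace_of_weak44_general {X : Type u} [TopologicalSpace X]
    (hX : IsWeak44Structured X) (F : Set X) (hF : IsClosed F) :
    IsWeak44Structured ↥F :=
  closedHereditary_isCharming.isImageOfPerfectPreimage hX hF

/-- Every closed subspace of a weak (4,4)-structured space is weak (4,4)-structured. -/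
theorem closed_subspace_of_weak44 {X : Type u} [TopologicalSpace X] [T35Space X]
    (hX : IsWeak44Structured X) (F : Set X) (hF : IsClosed F) :
    IsWeak44Structured ↥F :=
  closed_subspace_of_weak44_general hX F hF
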